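/- Let g(X,Z) = Z² − (1/2)Z²(Z⁴ − 1) + (1/2)XZ³ ∈ ℂ[X,Z]. There exists a ℂ-algebra isomorphism Φ : ℂ[X,Y,Z,W]/(XY − Z⁴ + 1) → ℂ[X,Y,Z,W]/(XZ − (XY + Z²)² + 1) such that, writing x̄, ȳ, z̄, w̄ for the residue classes of X, Y, Z, W: Φ(x̄) = x̄, Φ(z̄) = z̄ + x̄ w̄, x̄ · Φ(ȳ) = (z̄ + x̄ w̄)⁴ − 1, and x̄² · Φ(w̄) = (x̄ ȳ + z̄²) − g(x̄, z̄ + x̄ w̄). In particular, the cylinder over the iterated Danielewski hypersurface xz = (xy + z²)² − 1 is isomorphic to the cylinder over the classical Danielewski surface xy = z⁴ − 1. -/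

import Mathlib

/-!
On each cylinder there are functions `t` and `u` that form, together with `x`, a coordinate system
wherever `x` is invertible: `t = z`, `u = g(x, z) + x²w` on `xy = z⁴ - 1`, and `t = z + xw`,
`u = xy + z²` on `xz = (xy + z²)² - 1`. Since `x` is a nonzerodivisor on both, a homomorphism that
keeps `x` regular is determined by its values at `x`, `t`, `u`, so two homomorphisms that match
these triples are inverse to each other. To extend the matching over `x = 0` one has to see that
the other coordinates are functions on the other cylinder: `x ∣ t⁴ - 1` and `x² ∣ u - g(x, t)` in
one direction, `x ∣ u² - 1`, `x² ∣ xt - (u² - 1)` and `x ∣ u - z²` in the other.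

The polynomial `g` is forced modulo `x²`. On the iterated side `t² = u + xa` for some `a`, and
`u² = 1 + xz`, so that `t⁴ = 1 + xv` with `v ≡ t + 2ua` modulo `x`. As `u² ≡ 1`, this gives
`a ≡ u(v - t)/2 ≡ t²(v - t)/2`, whence `u ≡ t² - xt²(v - t)/2 = g(x, t)` modulo `x²`.
-/

open MvPolynomial

/-- The polynomial ring `ℂ[X,Y,Z,W]` with `X 0 = X`, `X 1 = Y`, `X 2 = Z`, `X 3 = W`. -/
abbrev R4 : Type := MvPolynomial (Fin 4) ℂ

/-- The coordinate ring of the cylinder over the classical Danielewski surface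
`xy = z⁴ - 1`. -/
abbrev WRing : Type := R4 ⧸ Ideal.span {(X 0 : R4) * X 1 - X 2 ^ 4 + 1}

/-- The coordinate ring of the cylinder over the iterated Danielewski hypersurface
`xz = (xy + z²)² - 1`. -/
abbrev HRing : Type := R4 ⧸ Ideal.span {(X 0 : R4) * X 2 - (X 0 * X 1 + X 2 ^ 2) ^ 2 + 1}

noncomputable abbrev wMk : R4 →+* WRing :=
  Ideal.Quotient.mk _

noncomputable abbrev hMk : R4 →+* HRing :=
  Ideal.Quotient.mk _

namespace DanielewskiCylinder

section CoordRing

variable {σ k : Type*} [CommRing k]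

/-- The coordinate ring of the affine hypersurface `F = 0`. -/
abbrev CoordRing (F : MvPolynomial σ k) : Type _ := MvPolynomial σ k ⧸ Ideal.span {F}

/-- The `i`-th coordinate function on the hypersurface `F = 0`, that is, the residue class of the
variable `X i`. -/
noncomputable def coord (F : MvPolynomial σ k) (i : σ) : CoordRing F :=
  Ideal.Quotient.mk _ (X i)

lemma aeval_coord_self (F : MvPolynomial σ k) : aeval (coord F) F = 0 := by
  have h : aeval (coord F) = Ideal.Quotient.mkₐ k (Ideal.span {F}) :=
    algHom_ext fun i => aeval_X _ i
  rw [h]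
  exact Ideal.Quotient.mk_singleton_self F

lemma coordRing_algHom_ext {B : Type*} [CommRing B] [Algebra k B] {F : MvPolynomial σ k}
    {φ ψ : CoordRing F →ₐ[k] B} (h : ∀ i, φ (coord F i) = ψ (coord F i)) : φ = ψ :=
  Ideal.Quotient.algHom_ext k (algHom_ext h)

lemma exists_algHom_coord_eq {B : Type*} [CommRing B] [Algebra k B] {F : MvPolynomial σ k}
    {b : σ → B} (hb : aeval b F = 0) : ∃ φ : CoordRing F →ₐ[k] B, ∀ i, φ (coord F i) = b i := by
  have hker : ∀ p ∈ Ideal.span {F}, aeval b p = 0 := fun p hp => by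
    obtain ⟨q, rfl⟩ := Ideal.mem_span_singleton.1 hp
    rw [map_mul, hb, zero_mul]
  exact ⟨Ideal.Quotient.liftₐ _ (aeval b) hker, fun i => aeval_X b i⟩

lemma X_dvd_coe_iff {p : MvPolynomial σ k} {i : σ} :
    MvPowerSeries.X i ∣ (p : MvPowerSeries σ k) ↔ X i ∣ p := by
  refine ⟨fun h => ?_, fun ⟨q, hq⟩ => ⟨q, by rw [hq, coe_mul, coe_X]⟩⟩
  rw [MvPowerSeries.X_dvd_iff] at h
  rw [X_dvd_iff_modMonomial_eq_zero]
  ext m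
  by_cases hm : Finsupp.single i 1 ≤ m
  · rw [coeff_modMonomial_of_le _ hm, coeff_zero]
  · rw [coeff_modMonomial_of_not_le _ hm, coeff_zero, ← coeff_coe]
    exact h m (by simpa using hm)

lemma X_dvd_of_X_dvd_mul {F q : MvPolynomial σ k} (hF : IsUnit (constantCoeff F)) {i : σ}
    (h : X i ∣ F * q) : X i ∣ q := by
  have hF' : IsUnit (F : MvPowerSeries σ k) := MvPowerSeries.isUnit_iff_constantCoeff.2 hF
  rw [← X_dvd_coe_iff, coe_mul, hF'.dvd_mul_left] at h
  exact X_dvd_coe_iff.1 h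

lemma isLeftRegular_coord {F : MvPolynomial σ k} (hF : IsUnit (constantCoeff F)) (i : σ) :
    IsLeftRegular (coord F i) := by
  refine isLeftRegular_of_non_zero_divisor _ fun a ha => ?_
  obtain ⟨p, rfl⟩ := Ideal.Quotient.mk_surjective a
  rw [coord, ← map_mul, Ideal.Quotient.eq_zero_iff_dvd] at ha
  obtain ⟨q, hq⟩ := ha
  obtain ⟨r, rfl⟩ := X_dvd_of_X_dvd_mul hF ⟨p, hq.symm⟩
  have hp : p = F * r := X_mul_cancel_left_iff.1 (hq.trans (mul_left_comm ..))
  rw [Ideal.Quotient.eq_zero_iff_dvd, hp]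
  exact dvd_mul_right F r

end CoordRing

section Points

variable (k : Type*) {A B : Type*} [CommRing k] [Invertible (2 : k)]
  [CommRing A] [Algebra k A] [CommRing B] [Algebra k B]

/-- The polynomial `g(x, z) = z² - z²(z⁴ - 1)/2 + xz³/2`, evaluated at a point of a `k`-algebra.
It approximates `xy + z²` modulo `x²` in terms of `x` and `z + xw` when
`xz = (xy + z²)² - 1`. -/
def firstOrderApprox (x z : A) : A :=
  z ^ 2 - (⅟2 : k) • (z ^ 2 * (z ^ 4 - 1)) + (⅟2 : k) • (x * z ^ 3)

lemma map_firstOrderApprox (φ : A →ₐ[k] B) (x z : A) :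
    φ (firstOrderApprox k x z) = firstOrderApprox k (φ x) (φ z) := by
  simp only [firstOrderApprox, map_add, map_sub, map_smul, map_mul, map_pow, map_one]

lemma firstOrderApprox_eq {x y z : A} (h : x * y = z ^ 4 - 1) :
    firstOrderApprox k x z = z ^ 2 * (1 + x * (⅟2 : k) • (z - y)) := by
  rw [firstOrderApprox, ← h]
  simp only [Algebra.smul_def]
  ring

lemma exists_danielewski_point {x y z : A} (w : A) (h : x * z = (x * y + z ^ 2) ^ 2 - 1) :
    ∃ v w', x * v = (z + x * w) ^ 4 - 1 ∧
      firstOrderApprox k x (z + x * w) + x ^ 2 * w' = x * y + z ^ 2 := by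
  obtain ⟨a, ht⟩ : ∃ a, (z + x * w) ^ 2 = x * y + z ^ 2 + x * a :=
    ⟨-y + 2 * z * w + x * w ^ 2, by ring⟩
  generalize x * y + z ^ 2 = u at h ht ⊢
  have hv : x * (z + 2 * u * a + x * a ^ 2) = (z + x * w) ^ 4 - 1 := by
    linear_combination h - ((z + x * w) ^ 2 + u + x * a) * ht
  obtain ⟨b, hb⟩ : ∃ b, (⅟2 : k) • (z + x * w - (z + 2 * u * a + x * a ^ 2)) = -u * a + x * b := by
    refine ⟨(⅟2 : k) • (w - a ^ 2), ?_⟩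
    rw [mul_smul_comm, invOf_smul_eq_iff, smul_add, smul_invOf_smul, two_smul]
    ring
  refine ⟨_, z * a + u * a ^ 2 - b * (z + x * w) ^ 2, hv, ?_⟩
  rw [firstOrderApprox_eq k hv, hb, ht]
  linear_combination x * a * h

lemma exists_iterated_point {x y z : A} (w : A) (h : x * y = z ^ 4 - 1) :
    ∃ y' z' w', x * z' = (x * y' + z' ^ 2) ^ 2 - 1 ∧ z' + x * w' = z ∧
      x * y' + z' ^ 2 = firstOrderApprox k x z + x ^ 2 * w := by
  rw [firstOrderApprox_eq k h]
  have hs : 2 * (⅟2 : k) • (z - y) = z - y := by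
    rw [two_mul, ← two_smul k, smul_invOf_smul]
  generalize (⅟2 : k) • (z - y) = s at hs ⊢
  obtain ⟨w', hu⟩ : ∃ w', (z ^ 2 * (1 + x * s) + x ^ 2 * w) ^ 2 = 1 + x * (z - x * w') := by
    refine ⟨-(s ^ 2 + 2 * y * s + x * y * s ^ 2 + 2 * z ^ 2 * (1 + x * s) * w + x ^ 2 * w ^ 2), ?_⟩
    linear_combination x * hs - (1 + x * s) ^ 2 * h
  have hy : x * (z ^ 2 * s + x * w + 2 * z * w' - x * w' ^ 2) + (z - x * w') ^ 2 =
      z ^ 2 * (1 + x * s) + x ^ 2 * w := by ring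
  refine ⟨_, z - x * w', w', ?_, by ring, hy⟩
  rw [hy, hu]
  ring

end Points

section Cylinders

variable (k : Type*) [CommRing k]

/-- The equation `xy - z⁴ + 1` of the classical Danielewski surface, in four variables. -/
noncomputable def danielewskiPoly : MvPolynomial (Fin 4) k := X 0 * X 1 - X 2 ^ 4 + 1

/-- The equation `xz - (xy + z²)² + 1` of the iterated Danielewski hypersurface, in four
variables. -/
noncomputable def iteratedPoly : MvPolynomial (Fin 4) k :=
  X 0 * X 2 - (X 0 * X 1 + X 2 ^ 2) ^ 2 + 1

/-- The function `t = z + xw` on the cylinder over the iterated hypersurface. -/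
noncomputable def iteratedT : CoordRing (iteratedPoly k) :=
  coord _ 2 + coord _ 0 * coord _ 3

/-- The function `u = xy + z²` on the cylinder over the iterated hypersurface. -/
noncomputable def iteratedU : CoordRing (iteratedPoly k) :=
  coord _ 0 * coord _ 1 + coord _ 2 ^ 2

/-- The function `u = g(x, z) + x²w` on the cylinder over the classical surface. -/
noncomputable def danielewskiU [Invertible (2 : k)] : CoordRing (danielewskiPoly k) :=
  firstOrderApprox k (coord _ 0) (coord _ 2) + coord _ 0 ^ 2 * coord _ 3

variable {B : Type*} [CommRing B] [Algebra k B]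

lemma aeval_danielewskiPoly_eq_zero_iff {b : Fin 4 → B} :
    aeval b (danielewskiPoly k) = 0 ↔ b 0 * b 1 = b 2 ^ 4 - 1 := by
  rw [← sub_eq_zero (a := b 0 * b 1)]
  simp [danielewskiPoly, sub_add]

lemma aeval_iteratedPoly_eq_zero_iff {b : Fin 4 → B} :
    aeval b (iteratedPoly k) = 0 ↔ b 0 * b 2 = (b 0 * b 1 + b 2 ^ 2) ^ 2 - 1 := by
  rw [← sub_eq_zero (a := b 0 * b 2)]
  simp [iteratedPoly, sub_add]

lemma danielewski_relation :
    coord (danielewskiPoly k) 0 * coord _ 1 = coord _ 2 ^ 4 - 1 :=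
  (aeval_danielewskiPoly_eq_zero_iff k).1 (aeval_coord_self _)

lemma iterated_relation :
    coord (iteratedPoly k) 0 * coord _ 2 = iteratedU k ^ 2 - 1 :=
  (aeval_iteratedPoly_eq_zero_iff k).1 (aeval_coord_self _)

lemma isLeftRegular_danielewski_coord (i : Fin 4) : IsLeftRegular (coord (danielewskiPoly k) i) :=
  isLeftRegular_coord (by simp [danielewskiPoly]) i

lemma isLeftRegular_iterated_coord (i : Fin 4) : IsLeftRegular (coord (iteratedPoly k) i) :=
  isLeftRegular_coord (by simp [iteratedPoly]) i

variable {k}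

lemma iterated_algHom_ext {φ ψ : CoordRing (iteratedPoly k) →ₐ[k] B}
    (hreg : IsLeftRegular (φ (coord _ 0))) (hx : φ (coord _ 0) = ψ (coord _ 0))
    (ht : φ (iteratedT k) = ψ (iteratedT k)) (hu : φ (iteratedU k) = ψ (iteratedU k)) :
    φ = ψ := by
  have hz : φ (coord _ 2) = ψ (coord _ 2) := hreg <| by
    change φ _ * φ _ = φ _ * ψ _
    rw [← map_mul, hx, ← map_mul, iterated_relation]
    simp only [map_sub, map_pow, map_one, hu]
  have hy : φ (coord _ 1) = ψ (coord _ 1) := hreg <| by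
    simpa [iteratedU, hx, hz] using hu
  have hw : φ (coord _ 3) = ψ (coord _ 3) := hreg <| by
    simpa [iteratedT, hx, hz] using ht
  refine coordRing_algHom_ext fun i => ?_
  fin_cases i
  exacts [hx, hy, hz, hw]

variable [Invertible (2 : k)]

lemma danielewski_algHom_ext {φ ψ : CoordRing (danielewskiPoly k) →ₐ[k] B}
    (hreg : IsLeftRegular (φ (coord _ 0))) (hx : φ (coord _ 0) = ψ (coord _ 0))
    (hz : φ (coord _ 2) = ψ (coord _ 2)) (hu : φ (danielewskiU k) = ψ (danielewskiU k)) :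
    φ = ψ := by
  have hy : φ (coord _ 1) = ψ (coord _ 1) := hreg <| by
    change φ _ * φ _ = φ _ * ψ _
    rw [← map_mul, hx, ← map_mul, danielewski_relation]
    simp only [map_sub, map_pow, map_one, hz]
  have hw : φ (coord _ 3) = ψ (coord _ 3) := hreg.pow 2 <| by
    simpa [danielewskiU, map_firstOrderApprox, hx, hz] using hu
  refine coordRing_algHom_ext fun i => ?_
  fin_cases i
  exacts [hx, hy, hz, hw]

variable (k)

lemma exists_algHom_danielewski_iterated :
    ∃ φ : CoordRing (danielewskiPoly k) →ₐ[k] CoordRing (iteratedPoly k),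
      φ (coord _ 0) = coord _ 0 ∧ φ (coord _ 2) = iteratedT k ∧
        φ (danielewskiU k) = iteratedU k := by
  obtain ⟨v, w, hv, hw⟩ := exists_danielewski_point k (coord _ 3) (iterated_relation k)
  obtain ⟨φ, hφ⟩ := exists_algHom_coord_eq (b := ![coord _ 0, v, iteratedT k, w])
    ((aeval_danielewskiPoly_eq_zero_iff k).2 hv)
  refine ⟨φ, hφ 0, hφ 2, ?_⟩
  rw [danielewskiU, map_add, map_firstOrderApprox, map_mul, map_pow, hφ, hφ, hφ]
  exact hw

lemma exists_algHom_iterated_danielewski :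
    ∃ ψ : CoordRing (iteratedPoly k) →ₐ[k] CoordRing (danielewskiPoly k),
      ψ (coord _ 0) = coord _ 0 ∧ ψ (iteratedT k) = coord _ 2 ∧
        ψ (iteratedU k) = danielewskiU k := by
  obtain ⟨y, z, w, hz, ht, hu⟩ := exists_iterated_point k (coord _ 3) (danielewski_relation k)
  obtain ⟨ψ, hψ⟩ := exists_algHom_coord_eq (b := ![coord _ 0, y, z, w])
    ((aeval_iteratedPoly_eq_zero_iff k).2 hz)
  refine ⟨ψ, hψ 0, ?_, ?_⟩
  · rw [iteratedT, map_add, map_mul, hψ, hψ, hψ]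
    exact ht
  · rw [iteratedU, map_add, map_mul, map_pow, hψ, hψ, hψ]
    exact hu

lemma exists_algEquiv_danielewski_iterated :
    ∃ Φ : CoordRing (danielewskiPoly k) ≃ₐ[k] CoordRing (iteratedPoly k),
      Φ (coord _ 0) = coord _ 0 ∧ Φ (coord _ 2) = iteratedT k ∧
        Φ (danielewskiU k) = iteratedU k := by
  obtain ⟨φ, hφx, hφz, hφu⟩ := exists_algHom_danielewski_iterated k
  obtain ⟨ψ, hψx, hψt, hψu⟩ := exists_algHom_iterated_danielewski k
  have hφψ : AlgHom.id k _ = φ.comp ψ :=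
    iterated_algHom_ext (isLeftRegular_iterated_coord k 0) (by simp [hψx, hφx])
      (by simp [hψt, hφz]) (by simp [hψu, hφu])
  have hψφ : AlgHom.id k _ = ψ.comp φ :=
    danielewski_algHom_ext (isLeftRegular_danielewski_coord k 0) (by simp [hφx, hψx])
      (by simp [hφz, hψt]) (by simp [hφu, hψu])
  exact ⟨AlgEquiv.ofAlgHom φ ψ hφψ.symm hψφ.symm, hφx, hφz, hφu⟩

end Cylinders

end DanielewskiCylinder

open DanielewskiCylinder in
theorem cylinder_over_iterated_Danielewski_hypersurface_explicit_iso_general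
    (k : Type*) [CommRing k] [Invertible (2 : k)] :
    ∃ Φ : CoordRing (danielewskiPoly k) ≃ₐ[k] CoordRing (iteratedPoly k),
      Φ (coord _ 0) = coord _ 0 ∧
      Φ (coord _ 2) = iteratedT k ∧
      coord _ 0 * Φ (coord _ 1) = iteratedT k ^ 4 - 1 ∧
      coord _ 0 ^ 2 * Φ (coord _ 3) =
        iteratedU k - firstOrderApprox k (coord _ 0) (iteratedT k) := by
  obtain ⟨Φ, hx, hz, hu⟩ := exists_algEquiv_danielewski_iterated k
  refine ⟨Φ, hx, hz, ?_, ?_⟩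
  · simpa [hx, hz] using congrArg Φ (danielewski_relation k)
  · rw [eq_sub_iff_add_eq', ← hu, danielewskiU, map_add, map_mul, map_pow,
      ← AlgEquiv.coe_toAlgHom, map_firstOrderApprox, AlgEquiv.coe_toAlgHom, hx, hz]

theorem cylinder_over_iterated_Danielewski_hypersurface_explicit_iso :
    ∃ Φ : WRing ≃ₐ[ℂ] HRing,
      Φ (wMk (X 0)) = hMk (X 0) ∧
      Φ (wMk (X 2)) = hMk (X 2) + hMk (X 0) * hMk (X 3) ∧
      hMk (X 0) * Φ (wMk (X 1)) = (hMk (X 2) + hMk (X 0) * hMk (X 3)) ^ 4 - 1 ∧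
      hMk (X 0) ^ 2 * Φ (wMk (X 3)) =
        (hMk (X 0) * hMk (X 1) + hMk (X 2) ^ 2) -
          -- g(x̄, z̄ + x̄w̄) where g(X,Z) = Z² − (1/2)Z²(Z⁴ − 1) + (1/2)XZ³
          ((hMk (X 2) + hMk (X 0) * hMk (X 3)) ^ 2
            - (1 / 2 : ℂ) • ((hMk (X 2) + hMk (X 0) * hMk (X 3)) ^ 2 *
                ((hMk (X 2) + hMk (X 0) * hMk (X 3)) ^ 4 - 1))
            + (1 / 2 : ℂ) • (hMk (X 0) * (hMk (X 2) + hMk (X 0) * hMk (X 3)) ^ 3)) :=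
  -- With this instance `⅟2` unfolds to `1 / 2`.
  letI : Invertible (2 : ℂ) := ⟨1 / 2, by norm_num, by norm_num⟩
  cylinder_over_iterated_Danielewski_hypersurface_explicit_iso_general ℂ
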